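/- For every p ∈ (1,2] there exists a constant K_p ∈ (0,∞) such that for every integer n ≥ 2 the bi-Lipschitz distortion of the ball B_n in the sequence space ℓ_p satisfies c_{ℓ_p}(B_n, d_W) ≥ K_p √(log n); equivalently, if D ≥ 1 and f : B_n → ℓ_p satisfies d_W(x,y) ≤ ‖f(x)−f(y)‖_p ≤ D·d_W(x,y) for all x,y ∈ B_n, then D ≥ K_p √(log n). -/

import Mathlib

/-- The discrete Heisenberg group, as ℤ³ with the Heisenberg multiplication
(equivalently, unit upper-triangular 3×3 integer matrices). -/
@[ext]
structure DH where
  x : ℤ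
  y : ℤ
  z : ℤ

namespace DH

instance : Mul DH := ⟨fun a b => ⟨a.x + b.x, a.y + b.y, a.z + b.z + a.x * b.y⟩⟩
instance : One DH := ⟨⟨0, 0, 0⟩⟩
instance : Inv DH := ⟨fun a => ⟨-a.x, -a.y, -a.z + a.x * a.y⟩⟩

lemma mul_def (a b : DH) : a * b = ⟨a.x + b.x, a.y + b.y, a.z + b.z + a.x * b.y⟩ := rfl
lemma one_def : (1 : DH) = ⟨0, 0, 0⟩ := rfl
lemma inv_def (a : DH) : a⁻¹ = ⟨-a.x, -a.y, -a.z + a.x * a.y⟩ := rfl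

instance : Group DH where
  mul_assoc a b c := by
    simp only [mul_def, mk.injEq]
    refine ⟨by ring, by ring, by ring⟩
  one_mul a := by simp [mul_def, one_def]
  mul_one a := by simp [mul_def, one_def]
  inv_mul_cancel a := by
    simp only [mul_def, inv_def, one_def, mk.injEq]
    refine ⟨by ring, by ring, by ring⟩

/-- The generator `a`. -/
def gA : DH := ⟨1, 0, 0⟩

/-- The generator `b`. -/
def gB : DH := ⟨0, 1, 0⟩

/-- The commutator `c = aba⁻¹b⁻¹`, a generator of the center. -/
def gC : DH := gA * gB * gA⁻¹ * gB⁻¹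

/-- Word length with respect to the symmetric generating set `{a, b, a⁻¹, b⁻¹}`. -/
noncomputable def wordLen (g : DH) : ℕ :=
  sInf {n | ∃ l : List DH, l.length = n ∧
    (∀ s ∈ l, s ∈ ({gA, gB, gA⁻¹, gB⁻¹} : Set DH)) ∧ l.prod = g}

/-- The left-invariant word metric on the discrete Heisenberg group. -/
noncomputable def dW (g h : DH) : ℕ := wordLen (g⁻¹ * h)

/-- The closed ball of radius `n` centered at the identity. -/
def Ball (n : ℕ) : Set DH := {g | dW g 1 ≤ n}

end DH

/-- A normed space is `2`-uniformly convex with constant `δ` if it satisfies the parallelogram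
inequality in which the difference term is weighted by `δ`. -/
def TwoConvex (δ : ℝ) (E : Type*) [NormedAddCommGroup E] : Prop :=
  ∀ x y : E, ‖x + y‖ ^ 2 + δ * ‖x - y‖ ^ 2 ≤ 2 * ‖x‖ ^ 2 + 2 * ‖y‖ ^ 2

section TwoPointInequality

variable {p : ℝ}

lemma two_add_mul_sq_le_rpow_add_rpow (hp1 : 1 < p) (hp2 : p ≤ 2) {u : ℝ} (hu0 : 0 ≤ u)
    (hu1 : u ≤ 1) :
    2 + p * ((p - 1) / 2) * u ^ 2 ≤ (1 + u) ^ p + (1 - u) ^ p := by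
  have hderiv (x : ℝ) : HasDerivAt
      (fun u : ℝ => (1 + u) ^ p + (1 - u) ^ p - p * ((p - 1) / 2) * u ^ 2)
      (p * ((1 + x) ^ (p - 1) - (1 - x) ^ (p - 1) - (p - 1) * x)) x := by
    have h1 := ((hasDerivAt_id x).const_add 1).rpow_const (p := p) (Or.inr hp1.le)
    have h2 := ((hasDerivAt_id x).const_sub 1).rpow_const (p := p) (Or.inr hp1.le)
    have h3 := ((hasDerivAt_id x).pow 2).const_mul (p * ((p - 1) / 2))
    refine ((h1.add h2).sub h3).congr_deriv ?_
    simp only [id]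
    push_cast
    ring
  have hmono : MonotoneOn (fun u : ℝ => (1 + u) ^ p + (1 - u) ^ p - p * ((p - 1) / 2) * u ^ 2)
      (Set.Icc 0 1) := by
    refine monotoneOn_of_deriv_nonneg (convex_Icc 0 1)
      (fun x _ => (hderiv x).continuousAt.continuousWithinAt)
      (fun x _ => (hderiv x).differentiableAt.differentiableWithinAt) fun x hx => ?_
    rw [interior_Icc] at hx
    rw [(hderiv x).deriv]
    have h1 : (1 : ℝ) ≤ (1 + x) ^ (p - 1) :=
      Real.one_le_rpow (by linarith [hx.1]) (by linarith)
    have h2 : (1 + -x) ^ (p - 1) ≤ 1 + (p - 1) * -x :=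
      rpow_one_add_le_one_add_mul_self (by linarith [hx.2]) (by linarith) (by linarith)
    rw [← sub_eq_add_neg] at h2
    exact mul_nonneg (by linarith) (by linarith)
  have h := hmono (Set.left_mem_Icc.2 zero_le_one) ⟨hu0, hu1⟩ hu0
  norm_num at h
  linarith

lemma two_mul_rpow_le_abs_rpow_add_of_abs_le (hp1 : 1 < p) (hp2 : p ≤ 2) {m d : ℝ}
    (h : |d| ≤ |m|) :
    2 * (m ^ 2 + (p - 1) / 2 * d ^ 2) ^ (p / 2) ≤ |m + d| ^ p + |m - d| ^ p := by
  rcases eq_or_ne m 0 with rfl | hm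
  · have hd : d = 0 := by simpa using h
    simp [hd, show p / 2 ≠ 0 by linarith, show p ≠ 0 by linarith]
  set t : ℝ := d / m
  have ht : |t| ≤ 1 := by
    rw [abs_div]
    exact div_le_one_of_le₀ h (abs_nonneg m)
  have hm2 : (m ^ 2) ^ (p / 2) = |m| ^ p := by
    rw [← sq_abs, ← Real.rpow_natCast, ← Real.rpow_mul (abs_nonneg m)]
    congr 1
    push_cast
    ring
  have hd : d = m * t := by simp only [t]; field_simp
  have hsum : |1 + t| ^ p + |1 - t| ^ p = (1 + |t|) ^ p + (1 - |t|) ^ p := by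
    rw [abs_of_nonneg (by linarith [neg_abs_le t] : 0 ≤ 1 + t),
      abs_of_nonneg (by linarith [le_abs_self t] : 0 ≤ 1 - t)]
    rcases abs_cases t with ⟨h, -⟩ | ⟨h, -⟩ <;> rw [h]
    rw [sub_neg_eq_add, ← sub_eq_add_neg, add_comm]
  have hl := two_add_mul_sq_le_rpow_add_rpow hp1 hp2 (abs_nonneg t) ht
  have hu : (1 + (p - 1) / 2 * t ^ 2) ^ (p / 2) ≤ 1 + p / 2 * ((p - 1) / 2 * t ^ 2) :=
    rpow_one_add_le_one_add_mul_self
      (by nlinarith [mul_nonneg (by linarith : 0 ≤ p - 1) (sq_nonneg t)])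
      (by linarith) (by linarith)
  have e1 : m ^ 2 + (p - 1) / 2 * d ^ 2 = m ^ 2 * (1 + (p - 1) / 2 * t ^ 2) := by rw [hd]; ring
  have e2 : m + d = m * (1 + t) := by rw [hd]; ring
  have e3 : m - d = m * (1 - t) := by rw [hd]; ring
  rw [e1, e2, e3, abs_mul, abs_mul, Real.mul_rpow (sq_nonneg m)
      (by nlinarith [mul_nonneg (by linarith : 0 ≤ p - 1) (sq_nonneg t)]),
    Real.mul_rpow (abs_nonneg _) (abs_nonneg _), Real.mul_rpow (abs_nonneg _) (abs_nonneg _), hm2,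
    ← mul_add, hsum]
  rw [sq_abs] at hl
  calc 2 * (|m| ^ p * (1 + (p - 1) / 2 * t ^ 2) ^ (p / 2))
      = |m| ^ p * (2 * (1 + (p - 1) / 2 * t ^ 2) ^ (p / 2)) := by ring
    _ ≤ |m| ^ p * ((1 + |t|) ^ p + (1 - |t|) ^ p) := by
        gcongr
        linarith

lemma two_mul_rpow_le_abs_rpow_add (hp1 : 1 < p) (hp2 : p ≤ 2) (m d : ℝ) :
    2 * (m ^ 2 + (p - 1) / 2 * d ^ 2) ^ (p / 2) ≤ |m + d| ^ p + |m - d| ^ p := by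
  rcases le_total |d| |m| with h | h
  · exact two_mul_rpow_le_abs_rpow_add_of_abs_le hp1 hp2 h
  · have h1 := two_mul_rpow_le_abs_rpow_add_of_abs_le hp1 hp2 h
    have h2 : m ^ 2 + (p - 1) / 2 * d ^ 2 ≤ d ^ 2 + (p - 1) / 2 * m ^ 2 := by
      nlinarith [sq_le_sq.2 h]
    have h3 : 0 ≤ m ^ 2 + (p - 1) / 2 * d ^ 2 :=
      add_nonneg (sq_nonneg m) (mul_nonneg (by linarith) (sq_nonneg d))
    have h4 := Real.rpow_le_rpow h3 h2 (by linarith : 0 ≤ p / 2)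
    rw [abs_sub_comm, add_comm m d]
    linarith

/-- A supporting-hyperplane form of the reverse Minkowski inequality for exponents `r ≤ 1`. -/
lemma rpow_sub_one_mul_add_le_add_rpow {r : ℝ} (hr0 : 0 ≤ r) (hr1 : r ≤ 1) {a b α β : ℝ}
    (ha : 0 < a) (hb : 0 < b) (hα : 0 ≤ α) (hβ : 0 ≤ β) :
    (a + b) ^ (r - 1) * (a * (α / a) ^ r + b * (β / b) ^ r) ≤ (α + β) ^ r := by
  have hab : 0 < a + b := add_pos ha hb
  have h := (Real.concaveOn_rpow hr0 hr1).2 (Set.mem_Ici.2 (div_nonneg hα ha.le))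
    (Set.mem_Ici.2 (div_nonneg hβ hb.le)) (div_nonneg ha.le hab.le) (div_nonneg hb.le hab.le)
    (by field_simp)
  simp only [smul_eq_mul] at h
  have e : a / (a + b) * (α / a) + b / (a + b) * (β / b) = (α + β) / (a + b) := by
    field_simp
  rw [e, Real.div_rpow (add_nonneg hα hβ) hab.le, le_div_iff₀ (by positivity)] at h
  refine le_trans (le_of_eq ?_) h
  rw [Real.rpow_sub_one hab.ne']
  ring

end TwoPointInequality

section TwoConvexSequenceSpaces

lemma twoConvex_lp_real {ι : Type*} {p : ℝ} (hp1 : 1 < p) (hp2 : p ≤ 2)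
    [Fact (1 ≤ ENNReal.ofReal p)] :
    TwoConvex ((p - 1) / 2) (lp (fun _ : ι => ℝ) (ENNReal.ofReal p)) := by
  have hp0 : 0 < p := by linarith
  have hpt : (ENNReal.ofReal p).toReal = p := ENNReal.toReal_ofReal hp0.le
  have hδ : 0 < (p - 1) / 2 := by linarith
  have hs (w : lp (fun _ : ι => ℝ) (ENNReal.ofReal p)) :
      HasSum (fun i => |w i| ^ p) (‖w‖ ^ p) := by
    have := lp.hasSum_norm (by rw [hpt]; exact hp0) w
    simpa only [hpt, Real.norm_eq_abs] using this
  have hsq (t : ℝ) (ht : 0 ≤ t) : (t ^ 2) ^ (p / 2) = t ^ p := by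
    rw [← Real.rpow_natCast, ← Real.rpow_mul ht]
    congr 1
    push_cast
    ring
  have hratio (t s : ℝ) (hs : 0 ≤ s) : (t ^ 2 / s ^ 2) ^ (p / 2) = |t| ^ p / s ^ p := by
    rw [← sq_abs t, Real.div_rpow (sq_nonneg _) (sq_nonneg _), hsq _ (abs_nonneg t), hsq _ hs]
  have key (m d : lp (fun _ : ι => ℝ) (ENNReal.ofReal p)) :
      2 * (‖m‖ ^ 2 + (p - 1) / 2 * ‖d‖ ^ 2) ^ (p / 2) ≤ ‖m + d‖ ^ p + ‖m - d‖ ^ p := by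
    rcases eq_or_ne d 0 with rfl | hd
    · simp [hsq, two_mul]
    rcases eq_or_ne m 0 with rfl | hm
    · have h1 : (p - 1) / 2 * ‖d‖ ^ 2 ≤ ‖d‖ ^ 2 := by
        nlinarith [sq_nonneg ‖d‖]
      have h2 := Real.rpow_le_rpow (by positivity) h1 (by linarith : 0 ≤ p / 2)
      rw [hsq _ (norm_nonneg d)] at h2
      simp only [norm_zero, zero_add, zero_sub, norm_neg, ne_eq, OfNat.ofNat_ne_zero,
        not_false_eq_true, zero_pow]
      linarith
    have hm' : 0 < ‖m‖ := norm_pos_iff.2 hm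
    have hd' : 0 < ‖d‖ := norm_pos_iff.2 hd
    set a : ℝ := ‖m‖ ^ 2 with ha
    set b : ℝ := (p - 1) / 2 * ‖d‖ ^ 2 with hb
    have ha0 : 0 < a := by positivity
    have hb0 : 0 < b := by positivity
    have h1 : HasSum (fun i => 2 * ((a + b) ^ (p / 2 - 1) *
        (a * (m i ^ 2 / a) ^ (p / 2) + b * ((p - 1) / 2 * d i ^ 2 / b) ^ (p / 2))))
        (2 * (a + b) ^ (p / 2)) := by
      have hmr (i : ι) : (m i ^ 2 / a) ^ (p / 2) = |m i| ^ p / ‖m‖ ^ p :=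
        hratio _ _ hm'.le
      have hdr (i : ι) : ((p - 1) / 2 * d i ^ 2 / b) ^ (p / 2) = |d i| ^ p / ‖d‖ ^ p := by
        rw [hb, mul_div_mul_left _ _ hδ.ne', hratio _ _ hd'.le]
      simp only [hmr, hdr, Real.rpow_sub_one (add_pos ha0 hb0).ne']
      have h := (((((hs m).div_const (‖m‖ ^ p)).mul_left a).add
        (((hs d).div_const (‖d‖ ^ p)).mul_left b)).mul_left ((a + b) ^ (p / 2 - 1))).mul_left 2
      rwa [div_self (by positivity), div_self (by positivity), mul_one, mul_one,
        Real.rpow_sub_one (add_pos ha0 hb0).ne', div_mul_cancel₀ _ (by positivity)] at h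
    refine hasSum_le (fun i => ?_) h1 ((hs (m + d)).add (hs (m - d)))
    refine le_trans ?_ (two_mul_rpow_le_abs_rpow_add hp1 hp2 (m i) (d i))
    gcongr
    exact rpow_sub_one_mul_add_le_add_rpow (by linarith) (by linarith) ha0 hb0 (sq_nonneg _)
      (by positivity)
  intro x y
  have h := key (x + y) (x - y)
  rw [show x + y + (x - y) = (2 : ℝ) • x by rw [two_smul]; abel,
    show x + y - (x - y) = (2 : ℝ) • y by rw [two_smul]; abel, norm_smul, norm_smul,
    ← hsq _ (by positivity), ← hsq (‖(2 : ℝ)‖ * ‖y‖) (by positivity)] at h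
  have hc := (Real.concaveOn_rpow (by linarith : 0 ≤ p / 2) (by linarith)).2
    (Set.mem_Ici.2 (sq_nonneg (‖(2 : ℝ)‖ * ‖x‖))) (Set.mem_Ici.2 (sq_nonneg (‖(2 : ℝ)‖ * ‖y‖)))
    (by norm_num : (0 : ℝ) ≤ 1 / 2) (by norm_num : (0 : ℝ) ≤ 1 / 2) (by norm_num)
  simp only [smul_eq_mul] at hc
  have hle := (Real.rpow_le_rpow_iff (by positivity) (by positivity)
    (by linarith : 0 < p / 2)).1 ((by linarith : (‖x + y‖ ^ 2 + (p - 1) / 2 * ‖x - y‖ ^ 2) ^ (p / 2)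
      ≤ _).trans hc)
  refine hle.trans (le_of_eq ?_)
  rw [Real.norm_ofNat]
  ring

lemma norm_sq_eq_tsum_lp_two {ι X : Type*} [NormedAddCommGroup X] (u : lp (fun _ : ι => X) 2) :
    HasSum (fun i => ‖u i‖ ^ 2) (‖u‖ ^ 2) := by
  simpa using lp.hasSum_norm (by norm_num) u

lemma TwoConvex.lp_two {δ : ℝ} {ι X : Type*} [NormedAddCommGroup X] (h : TwoConvex δ X) :
    TwoConvex δ (lp (fun _ : ι => X) 2) := by
  intro u v
  refine hasSum_le (fun i => ?_)
    ((norm_sq_eq_tsum_lp_two (u + v)).add ((norm_sq_eq_tsum_lp_two (u - v)).mul_left δ))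
    (((norm_sq_eq_tsum_lp_two u).mul_left 2).add ((norm_sq_eq_tsum_lp_two v).mul_left 2))
  simpa using h (u i) (v i)

end TwoConvexSequenceSpaces

namespace DH

@[simp] lemma mul_x (g h : DH) : (g * h).x = g.x + h.x := rfl
@[simp] lemma mul_y (g h : DH) : (g * h).y = g.y + h.y := rfl
@[simp] lemma mul_z (g h : DH) : (g * h).z = g.z + h.z + g.x * h.y := rfl
@[simp] lemma inv_x (g : DH) : g⁻¹.x = -g.x := rfl
@[simp] lemma inv_y (g : DH) : g⁻¹.y = -g.y := rfl
@[simp] lemma inv_z (g : DH) : g⁻¹.z = -g.z + g.x * g.y := rfl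
@[simp] lemma one_x : (1 : DH).x = 0 := rfl
@[simp] lemma one_y : (1 : DH).y = 0 := rfl
@[simp] lemma one_z : (1 : DH).z = 0 := rfl

/-- The symmetric generating set. -/
def gens : Set DH := {gA, gB, gA⁻¹, gB⁻¹}

lemma gA_pow (n : ℕ) : gA ^ n = ⟨n, 0, 0⟩ := by
  induction n with
  | zero => rfl
  | succ n ih => rw [pow_succ, ih]; ext <;> simp [gA]

lemma gB_pow (n : ℕ) : gB ^ n = ⟨0, n, 0⟩ := by
  induction n with
  | zero => rfl
  | succ n ih => rw [pow_succ, ih]; ext <;> simp [gB]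

lemma gC_pow (n : ℕ) : gC ^ n = ⟨0, 0, n⟩ := by
  induction n with
  | zero => rfl
  | succ n ih => rw [pow_succ, ih]; ext <;> simp [gA, gB, gC]

lemma gC_pow_mul (s t : ℕ) : gC ^ (s * t) = gA ^ s * gB ^ t * (gA ^ s)⁻¹ * (gB ^ t)⁻¹ := by
  rw [gC_pow, gA_pow, gB_pow]
  ext <;> simp

lemma gC_pow_mul_comm (n : ℕ) (g : DH) : gC ^ n * g = g * gC ^ n := by
  rw [gC_pow]
  ext <;> simp [add_comm]

lemma inv_mem_gens {s : DH} (hs : s ∈ gens) : s⁻¹ ∈ gens := by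
  simp only [gens, Set.mem_insert_iff, Set.mem_singleton_iff] at hs ⊢
  rcases hs with rfl | rfl | rfl | rfl <;> simp

lemma wordLen_prod_le {l : List DH} (hl : ∀ s ∈ l, s ∈ gens) : wordLen l.prod ≤ l.length :=
  Nat.sInf_le ⟨l, rfl, hl, rfl⟩

lemma closure_gens : Subgroup.closure gens = ⊤ := by
  refine (Subgroup.eq_top_iff' _).2 fun g => ?_
  have hA : gA ∈ Subgroup.closure gens := Subgroup.subset_closure (by simp [gens])
  have hB : gB ∈ Subgroup.closure gens := Subgroup.subset_closure (by simp [gens])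
  have hC : gC ∈ Subgroup.closure gens :=
    mul_mem (mul_mem (mul_mem hA hB) (inv_mem hA)) (inv_mem hB)
  have hzA (n : ℤ) : gA ^ n = ⟨n, 0, 0⟩ := by
    cases n with
    | ofNat n => simpa using gA_pow n
    | negSucc n => rw [zpow_negSucc, gA_pow]; ext <;> simp [Int.negSucc_eq]
  have hzB (n : ℤ) : gB ^ n = ⟨0, n, 0⟩ := by
    cases n with
    | ofNat n => simpa using gB_pow n
    | negSucc n => rw [zpow_negSucc, gB_pow]; ext <;> simp [Int.negSucc_eq]
  have hzC (n : ℤ) : gC ^ n = ⟨0, 0, n⟩ := by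
    cases n with
    | ofNat n => simpa using gC_pow n
    | negSucc n => rw [zpow_negSucc, gC_pow]; ext <;> simp [Int.negSucc_eq]
  have hg : g = gB ^ g.y * gA ^ g.x * gC ^ g.z := by
    rw [hzA, hzB, hzC]
    ext <;> simp
  rw [hg]
  exact mul_mem (mul_mem (zpow_mem hB _) (zpow_mem hA _)) (zpow_mem hC _)

lemma exists_word (g : DH) :
    ∃ l : List DH, l.length = wordLen g ∧ (∀ s ∈ l, s ∈ gens) ∧ l.prod = g := by
  refine Nat.sInf_mem (s := {n | ∃ l : List DH, l.length = n ∧ (∀ s ∈ l, s ∈ gens) ∧ l.prod = g}) ?_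
  have hg : g ∈ (Subgroup.closure gens).toSubmonoid := by rw [closure_gens]; trivial
  rw [Subgroup.closure_toSubmonoid] at hg
  obtain ⟨l, hl, rfl⟩ := Submonoid.exists_list_of_mem_closure hg
  refine ⟨l.length, l, rfl, fun s hs => ?_, rfl⟩
  rcases hl s hs with h | h
  · exact h
  · simpa using inv_mem_gens h

@[simp] lemma wordLen_one : wordLen 1 = 0 :=
  Nat.le_zero.1 (wordLen_prod_le (l := []) (by simp))

lemma wordLen_le_one {s : DH} (hs : s ∈ gens) : wordLen s ≤ 1 := by
  simpa using wordLen_prod_le (l := [s]) (by simpa using hs)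

lemma wordLen_mul_le (g h : DH) : wordLen (g * h) ≤ wordLen g + wordLen h := by
  obtain ⟨l, hl, hls, rfl⟩ := exists_word g
  obtain ⟨l', hl', hls', rfl⟩ := exists_word h
  rw [← hl, ← hl', ← List.prod_append, ← List.length_append]
  refine wordLen_prod_le fun s hs => ?_
  rcases List.mem_append.1 hs with h | h
  · exact hls s h
  · exact hls' s h

lemma wordLen_inv_le (g : DH) : wordLen g⁻¹ ≤ wordLen g := by
  obtain ⟨l, hl, hls, rfl⟩ := exists_word g
  rw [← hl, List.prod_inv_reverse]
  refine (wordLen_prod_le fun s hs => ?_).trans (by simp)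
  simp only [List.mem_reverse, List.mem_map] at hs
  obtain ⟨t, ht, rfl⟩ := hs
  exact inv_mem_gens (hls t ht)

@[simp] lemma wordLen_inv (g : DH) : wordLen g⁻¹ = wordLen g :=
  (wordLen_inv_le g).antisymm (by simpa using wordLen_inv_le g⁻¹)

lemma wordLen_pow_le {s : DH} (hs : s ∈ gens) (n : ℕ) : wordLen (s ^ n) ≤ n := by
  induction n with
  | zero => simp
  | succ n ih =>
    rw [pow_succ]
    exact (wordLen_mul_le _ _).trans (add_le_add ih (wordLen_le_one hs))

lemma gA_mem_gens : gA ∈ gens := by simp [gens]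

lemma gB_mem_gens : gB ∈ gens := by simp [gens]

lemma wordLen_gC_pow_mul_le (s t : ℕ) : wordLen (gC ^ (s * t)) ≤ 2 * (s + t) := by
  rw [gC_pow_mul]
  have h1 := wordLen_mul_le (gA ^ s * gB ^ t * (gA ^ s)⁻¹) (gB ^ t)⁻¹
  have h2 := wordLen_mul_le (gA ^ s * gB ^ t) (gA ^ s)⁻¹
  have h3 := wordLen_mul_le (gA ^ s) (gB ^ t)
  have h4 := wordLen_pow_le gA_mem_gens s
  have h5 := wordLen_pow_le gB_mem_gens t
  rw [wordLen_inv] at h1 h2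
  omega

lemma wordLen_gC_two_pow_sq_le (k : ℕ) : wordLen (gC ^ 2 ^ k) ^ 2 ≤ 36 * 2 ^ k := by
  obtain ⟨j, rfl | rfl⟩ := k.even_or_odd'
  · have h := wordLen_gC_pow_mul_le (2 ^ j) (2 ^ j)
    rw [← pow_add, ← two_mul] at h
    calc _ ≤ (2 * (2 ^ j + 2 ^ j)) ^ 2 := Nat.pow_le_pow_left h 2
      _ = 16 * 2 ^ (2 * j) := by ring
      _ ≤ _ := by omega
  · have h := wordLen_gC_pow_mul_le (2 ^ j) (2 ^ (j + 1))
    rw [← pow_add, ← add_assoc, ← two_mul] at h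
    calc _ ≤ (2 * (2 ^ j + 2 ^ (j + 1))) ^ 2 := Nat.pow_le_pow_left h 2
      _ = 18 * 2 ^ (2 * j + 1) := by ring
      _ ≤ _ := by omega

lemma coord_bounds (g : DH) :
    |g.x| ≤ wordLen g ∧ |g.y| ≤ wordLen g ∧ |g.z| ≤ (wordLen g : ℤ) ^ 2 := by
  obtain ⟨l, hl, hls, rfl⟩ := exists_word g
  rw [← hl]
  clear hl
  induction l with
  | nil => simp
  | cons s l ih =>
    obtain ⟨hx, hy, hz⟩ := ih fun t ht => hls t (List.mem_cons_of_mem s ht)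
    have hs := hls s List.mem_cons_self
    rw [abs_le] at hx hy hz
    simp only [gens, Set.mem_insert_iff, Set.mem_singleton_iff] at hs
    rw [List.prod_cons, List.length_cons, abs_le, abs_le, abs_le]
    push_cast
    rcases hs with rfl | rfl | rfl | rfl <;>
      simp only [mul_x, mul_y, mul_z, inv_x, inv_y, inv_z, gA, gB] <;>
      refine ⟨⟨?_, ?_⟩, ⟨?_, ?_⟩, ⟨?_, ?_⟩⟩ <;> nlinarith

lemma le_wordLen_gC_pow_sq (m : ℕ) : m ≤ wordLen (gC ^ m) ^ 2 := by
  have h := (coord_bounds (gC ^ m)).2.2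
  rw [gC_pow] at h ⊢
  simp only [abs_of_nonneg (Int.natCast_nonneg m)] at h
  exact_mod_cast h

lemma mem_Ball {n : ℕ} {g : DH} : g ∈ Ball n ↔ wordLen g ≤ n := by
  simp [Ball, dW]

lemma dW_self_mul (x g : DH) : dW x (x * g) = wordLen g := by
  simp [dW]

lemma dW_one (x : DH) : dW x 1 = wordLen x := by
  simp [dW]

lemma Ball_subset_image (n : ℕ) :
    Ball n ⊆ (fun t : ℤ × ℤ × ℤ => (⟨t.1, t.2.1, t.2.2⟩ : DH)) ''
      (Finset.Icc (-(n : ℤ)) n ×ˢ Finset.Icc (-(n : ℤ)) n ×ˢ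
        Finset.Icc (-(n : ℤ) ^ 2) (n ^ 2) : Finset (ℤ × ℤ × ℤ)) := by
  intro g hg
  obtain ⟨hx, hy, hz⟩ := coord_bounds g
  have hn : (wordLen g : ℤ) ≤ n := mod_cast mem_Ball.1 hg
  have hn2 : (wordLen g : ℤ) ^ 2 ≤ n ^ 2 := by gcongr
  refine ⟨(g.x, g.y, g.z), ?_, rfl⟩
  simp only [Finset.coe_product, Finset.coe_Icc, Set.mem_prod, Set.mem_Icc, ← abs_le]
  exact ⟨hx.trans hn, hy.trans hn, hz.trans hn2⟩

lemma finite_Ball (n : ℕ) : (Ball n).Finite :=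
  ((Finset.finite_toSet _).image _).subset (Ball_subset_image n)

lemma ncard_Ball_le {n : ℕ} (hn : 1 ≤ n) : (Ball n).ncard ≤ 27 * n ^ 4 := by
  refine (Set.ncard_le_ncard (Ball_subset_image n) ((Finset.finite_toSet _).image _)).trans ?_
  refine (Set.ncard_image_le (Finset.finite_toSet _)).trans ?_
  rw [Set.ncard_coe_finset, Finset.card_product, Finset.card_product, Int.card_Icc, Int.card_Icc]
  have h1 : ((n : ℤ) + 1 - -n).toNat = 2 * n + 1 := by omega
  have h2 : ((n : ℤ) ^ 2 + 1 - -(n : ℤ) ^ 2).toNat = 2 * n ^ 2 + 1 := by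
    have : (n : ℤ) ^ 2 + 1 - -(n : ℤ) ^ 2 = ((2 * n ^ 2 + 1 : ℕ) : ℤ) := by push_cast; ring
    rw [this, Int.toNat_natCast]
  rw [h1, h2]
  have h3 : 2 * n + 1 ≤ 3 * n := by omega
  have h4 : 2 * n ^ 2 + 1 ≤ 3 * n ^ 2 := by nlinarith
  calc _ ≤ (3 * n) * ((3 * n) * (3 * n ^ 2)) := by gcongr
    _ = _ := by ring

lemma pow_four_le_ncard_Ball {r : ℕ} (hr : 1 ≤ r) : r ^ 4 ≤ (Ball (10 * r)).ncard := by
  let F : ℕ × ℕ × ℕ → DH := fun t => gB ^ t.2.1 * gA ^ t.1 * gC ^ t.2.2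
  have hF (t : ℕ × ℕ × ℕ) : F t = ⟨t.1, t.2.1, t.2.2⟩ := by
    simp only [F, gA_pow, gB_pow, gC_pow]
    ext <;> simp
  have hinj : Function.Injective F := by
    intro s t h
    rw [hF, hF, DH.mk.injEq] at h
    ext <;> omega
  let S : Finset (ℕ × ℕ × ℕ) := Finset.range r ×ˢ Finset.range r ×ˢ Finset.range (r ^ 2)
  have hS : S.card = r ^ 4 := by
    simp only [S, Finset.card_product, Finset.card_range]
    ring
  rw [← hS, ← Set.ncard_coe_finset, ← Set.ncard_image_of_injective _ hinj]
  refine Set.ncard_le_ncard ?_ (finite_Ball _)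
  rintro _ ⟨⟨x, y, z⟩, ht, rfl⟩
  simp only [S, Finset.coe_product, Finset.coe_range, Set.mem_prod, Set.mem_Iio] at ht
  obtain ⟨hx, hy, hz⟩ := ht
  rw [mem_Ball]
  have hq : z / r < r := Nat.div_lt_of_lt_mul (by rwa [← sq])
  have hm : z % r < r := Nat.mod_lt _ hr
  have hz' : gC ^ z = gC ^ (r * (z / r)) * gC ^ (1 * (z % r)) := by
    rw [← pow_add, one_mul, Nat.div_add_mod]
  have h1 := wordLen_mul_le (gB ^ y * gA ^ x) (gC ^ z)
  have h2 := wordLen_mul_le (gB ^ y) (gA ^ x)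
  have h3 := wordLen_mul_le (gC ^ (r * (z / r))) (gC ^ (1 * (z % r)))
  have h4 := wordLen_gC_pow_mul_le r (z / r)
  have h5 := wordLen_gC_pow_mul_le 1 (z % r)
  have h6 := wordLen_pow_le gA_mem_gens x
  have h7 := wordLen_pow_le gB_mem_gens y
  rw [← hz'] at h3
  change wordLen (gB ^ y * gA ^ x * gC ^ z) ≤ _
  omega

end DH

namespace DH

section Representation

variable {E : Type*} [NormedAddCommGroup E] [NormedSpace ℝ E] (π : DH →* (E →ₗᵢ[ℝ] E))

lemma map_mul_apply (g h : DH) (v : E) : π (g * h) v = π g (π h v) := by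
  rw [map_mul]
  rfl

lemma norm_sub_map_inv (g : DH) (v : E) : ‖v - π g⁻¹ v‖ = ‖v - π g v‖ := by
  rw [← (π g).norm_map (v - π g⁻¹ v), map_sub, ← map_mul_apply, mul_inv_cancel,
    map_one, LinearIsometry.coe_one, id, norm_sub_rev]

lemma norm_sub_map_mul_le (g h : DH) (v : E) :
    ‖v - π (g * h) v‖ ≤ ‖v - π g v‖ + ‖v - π h v‖ := by
  have e : v - π (g * h) v = (v - π g v) + π g (v - π h v) := by
    rw [map_mul_apply, map_sub]
    abel
  rw [e]
  exact (norm_add_le _ _).trans (by rw [LinearIsometry.norm_map])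

lemma norm_sub_map_le_wordLen (g : DH) (v : E) :
    ‖v - π g v‖ ≤ wordLen g * (‖v - π gA v‖ + ‖v - π gB v‖) := by
  obtain ⟨l, hl, hls, rfl⟩ := exists_word g
  rw [← hl]
  clear hl
  induction l with
  | nil => simp
  | cons s l ih =>
    have ih := ih fun t ht => hls t (List.mem_cons_of_mem s ht)
    have hs : ‖v - π s v‖ ≤ ‖v - π gA v‖ + ‖v - π gB v‖ := by
      have hs := hls s List.mem_cons_self
      simp only [gens, Set.mem_insert_iff, Set.mem_singleton_iff] at hs
      rcases hs with rfl | rfl | rfl | rfl <;> simp [norm_sub_map_inv]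
    rw [List.prod_cons, List.length_cons]
    push_cast
    linarith [norm_sub_map_mul_le π s l.prod v]

lemma norm_sub_map_gC_two_pow_sq_le (k : ℕ) (v : E) :
    ‖v - π (gC ^ 2 ^ k) v‖ ^ 2 ≤ 72 * 2 ^ k * (‖v - π gA v‖ ^ 2 + ‖v - π gB v‖ ^ 2) := by
  have h1 := norm_sub_map_le_wordLen π (gC ^ 2 ^ k) v
  have h2 : (wordLen (gC ^ 2 ^ k) : ℝ) ^ 2 ≤ 36 * 2 ^ k := mod_cast wordLen_gC_two_pow_sq_le k
  calc ‖v - π (gC ^ 2 ^ k) v‖ ^ 2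
      ≤ (wordLen (gC ^ 2 ^ k) * (‖v - π gA v‖ + ‖v - π gB v‖)) ^ 2 := by gcongr
    _ = (wordLen (gC ^ 2 ^ k) : ℝ) ^ 2 * (‖v - π gA v‖ + ‖v - π gB v‖) ^ 2 := by ring
    _ ≤ (36 * 2 ^ k) * (2 * (‖v - π gA v‖ ^ 2 + ‖v - π gB v‖ ^ 2)) := by
        gcongr
        exact add_sq_le
    _ = _ := by ring

/-- The average of `π (c ^ j) v` over `0 ≤ j < 2 ^ k`, built by successive halving. -/
noncomputable def centralAvg : ℕ → E →ₗ[ℝ] E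
  | 0 => LinearMap.id
  | k + 1 => (1 / 2 : ℝ) • (centralAvg k + (π (gC ^ 2 ^ k)).toLinearMap ∘ₗ centralAvg k)

/-- The difference of the averages over two consecutive central segments of length `2 ^ k`. -/
noncomputable def centralDiff (k : ℕ) : E →ₗ[ℝ] E :=
  centralAvg π k - (π (gC ^ 2 ^ k)).toLinearMap ∘ₗ centralAvg π k

lemma centralAvg_succ (k : ℕ) (v : E) :
    centralAvg π (k + 1) v = (1 / 2 : ℝ) • (centralAvg π k v + π (gC ^ 2 ^ k) (centralAvg π k v)) :=
  rfl

lemma centralDiff_apply (k : ℕ) (v : E) :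
    centralDiff π k v = centralAvg π k v - π (gC ^ 2 ^ k) (centralAvg π k v) :=
  rfl

lemma map_map_gC_pow (n : ℕ) (g : DH) (v : E) : π g (π (gC ^ n) v) = π (gC ^ n) (π g v) := by
  rw [← map_mul_apply, ← map_mul_apply, gC_pow_mul_comm]

lemma centralAvg_map (k : ℕ) (g : DH) (v : E) :
    centralAvg π k (π g v) = π g (centralAvg π k v) := by
  induction k with
  | zero => rfl
  | succ k ih => rw [centralAvg_succ, centralAvg_succ, ih, map_smul, map_add, map_map_gC_pow]

lemma centralDiff_map (k : ℕ) (g : DH) (v : E) :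
    centralDiff π k (π g v) = π g (centralDiff π k v) := by
  rw [centralDiff_apply, centralDiff_apply, centralAvg_map, map_sub, map_map_gC_pow]

lemma centralDiff_eq_centralAvg (k : ℕ) (v : E) :
    centralDiff π k v = centralAvg π k (v - π (gC ^ 2 ^ k) v) := by
  rw [centralDiff_apply, map_sub, centralAvg_map]

lemma centralAvg_succ_eq_sub (k : ℕ) (v : E) :
    centralAvg π (k + 1) v = centralAvg π k v - (1 / 2 : ℝ) • centralDiff π k v := by
  rw [centralAvg_succ, centralDiff_apply]
  module

lemma norm_centralAvg_le (k : ℕ) (v : E) : ‖centralAvg π k v‖ ≤ ‖v‖ := by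
  induction k with
  | zero => rfl
  | succ k ih =>
    have h := norm_add_le (centralAvg π k v) (π (gC ^ 2 ^ k) (centralAvg π k v))
    rw [LinearIsometry.norm_map] at h
    rw [centralAvg_succ, norm_smul, Real.norm_of_nonneg (by norm_num)]
    linarith

lemma centralDiff_succ (k : ℕ) (v : E) :
    centralDiff π (k + 1) v = (2 : ℝ) • centralDiff π k v
      - ((3 / 2 : ℝ) • (centralDiff π k v - π (gC ^ 2 ^ k) (centralDiff π k v))
        + (1 / 2 : ℝ) • π (gC ^ 2 ^ k)
            (centralDiff π k v - π (gC ^ 2 ^ k) (centralDiff π k v))) := by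
  have e (w : E) : π (gC ^ 2 ^ (k + 1)) w = π (gC ^ 2 ^ k) (π (gC ^ 2 ^ k) w) := by
    rw [← map_mul_apply, ← pow_add, ← two_mul, ← pow_succ']
  simp only [centralDiff_apply, centralAvg_succ, e, map_sub, map_add, map_smul]
  module

lemma norm_centralDiff_le (k : ℕ) (v : E) :
    ‖centralDiff π k v‖ ≤ 1 / 2 * ‖centralDiff π (k + 1) v‖
      + ‖centralDiff π k v - π (gC ^ 2 ^ k) (centralDiff π k v)‖ := by
  set w := centralDiff π k v - π (gC ^ 2 ^ k) (centralDiff π k v) with hw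
  have e : centralDiff π k v = (1 / 2 : ℝ) • centralDiff π (k + 1) v
      + ((3 / 4 : ℝ) • w + (1 / 4 : ℝ) • π (gC ^ 2 ^ k) w) := by
    rw [centralDiff_succ, ← hw]
    module
  have h1 := norm_add_le ((1 / 2 : ℝ) • centralDiff π (k + 1) v)
    ((3 / 4 : ℝ) • w + (1 / 4 : ℝ) • π (gC ^ 2 ^ k) w)
  have h2 := norm_add_le ((3 / 4 : ℝ) • w) ((1 / 4 : ℝ) • π (gC ^ 2 ^ k) w)
  rw [← e] at h1
  simp only [norm_smul, LinearIsometry.norm_map] at h1 h2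
  norm_num at h1 h2
  linarith

/-- A Littlewood–Paley inequality for dyadic central averages in a uniformly convex space. -/
lemma sum_norm_centralDiff_sq_le {δ : ℝ} (hE : TwoConvex δ E) (K : ℕ) (v : E) :
    δ * ∑ k ∈ Finset.range K, ‖centralDiff π k v‖ ^ 2 ≤ 4 * ‖v‖ ^ 2 := by
  suffices h : δ * ∑ k ∈ Finset.range K, ‖centralDiff π k v‖ ^ 2
      ≤ 4 * ‖v‖ ^ 2 - 4 * ‖centralAvg π K v‖ ^ 2 by
    linarith [sq_nonneg ‖centralAvg π K v‖]
  induction K with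
  | zero => simp [centralAvg]
  | succ K ih =>
    have h := hE (centralAvg π K v) (π (gC ^ 2 ^ K) (centralAvg π K v))
    rw [LinearIsometry.norm_map, ← centralDiff_apply] at h
    have e : ‖centralAvg π (K + 1) v‖
        = 1 / 2 * ‖centralAvg π K v + π (gC ^ 2 ^ K) (centralAvg π K v)‖ := by
      rw [centralAvg_succ, norm_smul, Real.norm_of_nonneg (by norm_num)]
    rw [Finset.sum_range_succ, mul_add, e]
    linarith

/-- The second central differences are controlled by the horizontal differences. -/
lemma sum_second_centralDiff_le {δ : ℝ} (hδ : 0 < δ) (hE : TwoConvex δ E) (K : ℕ) (v : E) :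
    ∑ k ∈ Finset.range K,
        ‖centralDiff π k v - π (gC ^ 2 ^ k) (centralDiff π k v)‖ ^ 2 / 2 ^ k
      ≤ 288 / δ * (‖v - π gA v‖ ^ 2 + ‖v - π gB v‖ ^ 2) := by
  have hk (k : ℕ) : ‖centralDiff π k v - π (gC ^ 2 ^ k) (centralDiff π k v)‖ ^ 2 / 2 ^ k
      ≤ 72 * (‖centralDiff π k (v - π gA v)‖ ^ 2 + ‖centralDiff π k (v - π gB v)‖ ^ 2) := by
    rw [div_le_iff₀ (by positivity), map_sub, map_sub, centralDiff_map, centralDiff_map]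
    linarith [norm_sub_map_gC_two_pow_sq_le π k (centralDiff π k v)]
  refine (Finset.sum_le_sum fun k _ => hk k).trans ?_
  rw [← Finset.mul_sum, Finset.sum_add_distrib, div_mul_eq_mul_div, le_div_iff₀ hδ]
  linarith [sum_norm_centralDiff_sq_le π hE K (v - π gA v),
    sum_norm_centralDiff_sq_le π hE K (v - π gB v)]

lemma sum_centralDiff_le {δ : ℝ} (hδ : 0 < δ) (hE : TwoConvex δ E) (K : ℕ) (v : E) :
    ∑ k ∈ Finset.range K, ‖centralDiff π k v‖ ^ 2 / 2 ^ k
      ≤ (216 + 3456 / δ) * (‖v - π gA v‖ ^ 2 + ‖v - π gB v‖ ^ 2) := by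
  set d : ℕ → ℝ := fun k => ‖centralDiff π k v‖ ^ 2 / 2 ^ k with hd
  set s : ℕ → ℝ :=
    fun k => ‖centralDiff π k v - π (gC ^ 2 ^ k) (centralDiff π k v)‖ ^ 2 / 2 ^ k with hs
  have hd0 (k : ℕ) : 0 ≤ d k := by positivity
  have hrec (k : ℕ) : d k ≤ 3 / 4 * d (k + 1) + 3 * s k := by
    have h := norm_centralDiff_le π k v
    have e : 3 / 4 * d (k + 1) + 3 * s k = (3 / 8 * ‖centralDiff π (k + 1) v‖ ^ 2
        + 3 * ‖centralDiff π k v - π (gC ^ 2 ^ k) (centralDiff π k v)‖ ^ 2) / 2 ^ k := by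
      simp only [hd, hs, pow_succ]
      field_simp
      ring
    rw [e]
    simp only [hd]
    gcongr
    set x := ‖centralDiff π (k + 1) v‖
    set y := ‖centralDiff π k v - π (gC ^ 2 ^ k) (centralDiff π k v)‖
    have := pow_le_pow_left₀ (norm_nonneg _) h 2
    nlinarith [sq_nonneg (x / 2 - 2 * y)]
  have hlast : d K ≤ 72 * (‖v - π gA v‖ ^ 2 + ‖v - π gB v‖ ^ 2) := by
    simp only [hd]
    rw [div_le_iff₀ (by positivity), centralDiff_eq_centralAvg]
    have := pow_le_pow_left₀ (norm_nonneg _) (norm_centralAvg_le π K (v - π (gC ^ 2 ^ K) v)) 2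
    linarith [norm_sub_map_gC_two_pow_sq_le π K v]
  have hsum : ∑ k ∈ Finset.range K, d k
      ≤ 3 / 4 * ∑ k ∈ Finset.range K, d (k + 1) + 3 * ∑ k ∈ Finset.range K, s k := by
    rw [Finset.mul_sum, Finset.mul_sum, ← Finset.sum_add_distrib]
    exact Finset.sum_le_sum fun k _ => hrec k
  have hshift := Finset.sum_range_succ' d K
  rw [Finset.sum_range_succ] at hshift
  have h2 := sum_second_centralDiff_le π hδ hE K v
  have e : (216 + 3456 / δ) * (‖v - π gA v‖ ^ 2 + ‖v - π gB v‖ ^ 2)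
      = 3 * (72 * (‖v - π gA v‖ ^ 2 + ‖v - π gB v‖ ^ 2))
        + 12 * (288 / δ * (‖v - π gA v‖ ^ 2 + ‖v - π gB v‖ ^ 2)) := by ring
  linarith [hd0 0]

/-- The vertical versus horizontal Poincaré inequality for isometric representations of the
Heisenberg group on uniformly convex spaces, at dyadic vertical scales. -/
theorem sum_vertical_le_horizontal {δ : ℝ} (hδ : 0 < δ) (hE : TwoConvex δ E) (K : ℕ) (v : E) :
    ∑ k ∈ Finset.range K, ‖v - π (gC ^ 2 ^ k) v‖ ^ 2 / 2 ^ k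
      ≤ 14 * (216 + 3456 / δ) * (‖v - π gA v‖ ^ 2 + ‖v - π gB v‖ ^ 2) := by
  set d : ℕ → ℝ := fun k => ‖centralDiff π k v‖ ^ 2 / 2 ^ k with hd
  set r : ℕ → ℝ := fun k => ‖v - centralAvg π k v‖ ^ 2 / 2 ^ k with hr
  have hr0 : r 0 = 0 := by simp [hr, centralAvg]
  have hrnn (k : ℕ) : 0 ≤ r k := by positivity
  have hrec (k : ℕ) : r (k + 1) ≤ 3 / 4 * r k + 3 / 8 * d k := by
    have e : v - centralAvg π (k + 1) v
        = (v - centralAvg π k v) + (1 / 2 : ℝ) • centralDiff π k v := by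
      rw [centralAvg_succ_eq_sub]
      abel
    have h := norm_add_le (v - centralAvg π k v) ((1 / 2 : ℝ) • centralDiff π k v)
    rw [← e, norm_smul, Real.norm_of_nonneg (by norm_num)] at h
    have e2 : 3 / 4 * r k + 3 / 8 * d k = (3 / 2 * ‖v - centralAvg π k v‖ ^ 2
        + 3 / 4 * ‖centralDiff π k v‖ ^ 2) / 2 ^ (k + 1) := by
      simp only [hd, hr, pow_succ]
      field_simp
      ring
    rw [e2]
    simp only [hr]
    gcongr
    set x := ‖v - centralAvg π k v‖
    set y := ‖centralDiff π k v‖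
    have := pow_le_pow_left₀ (norm_nonneg _) h 2
    nlinarith [sq_nonneg (x - y)]
  have hv (k : ℕ) : ‖v - π (gC ^ 2 ^ k) v‖ ^ 2 / 2 ^ k ≤ 2 * d k + 8 * r k := by
    have e : v - π (gC ^ 2 ^ k) v = centralDiff π k v
        + ((v - centralAvg π k v) - π (gC ^ 2 ^ k) (v - centralAvg π k v)) := by
      rw [centralDiff_apply, map_sub]
      abel
    have h1 := norm_add_le (centralDiff π k v)
      ((v - centralAvg π k v) - π (gC ^ 2 ^ k) (v - centralAvg π k v))
    have h2 := norm_sub_le (v - centralAvg π k v) (π (gC ^ 2 ^ k) (v - centralAvg π k v))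
    rw [← e] at h1
    rw [LinearIsometry.norm_map] at h2
    have e2 : 2 * d k + 8 * r k = (2 * ‖centralDiff π k v‖ ^ 2
        + 8 * ‖v - centralAvg π k v‖ ^ 2) / 2 ^ k := by
      simp only [hd, hr]
      ring
    rw [e2]
    gcongr
    set x := ‖v - centralAvg π k v‖
    set y := ‖centralDiff π k v‖
    have h3 : ‖v - π (gC ^ 2 ^ k) v‖ ≤ y + 2 * x := by linarith
    have := pow_le_pow_left₀ (norm_nonneg _) h3 2
    nlinarith [sq_nonneg (y - 2 * x)]
  have hsumr : ∑ k ∈ Finset.range K, r (k + 1)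
      ≤ 3 / 4 * ∑ k ∈ Finset.range K, r k + 3 / 8 * ∑ k ∈ Finset.range K, d k := by
    rw [Finset.mul_sum, Finset.mul_sum, ← Finset.sum_add_distrib]
    exact Finset.sum_le_sum fun k _ => hrec k
  have hshift := Finset.sum_range_succ' r K
  rw [Finset.sum_range_succ, hr0] at hshift
  have hd' := sum_centralDiff_le π hδ hE K v
  calc ∑ k ∈ Finset.range K, ‖v - π (gC ^ 2 ^ k) v‖ ^ 2 / 2 ^ k
      ≤ ∑ k ∈ Finset.range K, (2 * d k + 8 * r k) := Finset.sum_le_sum fun k _ => hv k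
    _ = 2 * ∑ k ∈ Finset.range K, d k + 8 * ∑ k ∈ Finset.range K, r k := by
        rw [Finset.sum_add_distrib, Finset.mul_sum, Finset.mul_sum]
    _ ≤ 14 * ∑ k ∈ Finset.range K, d k := by linarith [hrnn K]
    _ ≤ _ := by linarith

end Representation

end DH

namespace DH

section RegularRepresentation

variable (X : Type*) [NormedAddCommGroup X] [NormedSpace ℝ X]

/-- The right regular representation of the Heisenberg group on `ℓ₂(ℍ; X)`. -/
noncomputable def rightRegular :
    DH →* (lp (fun _ : DH => X) 2 →ₗᵢ[ℝ] lp (fun _ : DH => X) 2) where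
  toFun g :=
    { toFun := fun u => ⟨fun x => u (x * g), memℓp_gen <| by
        simpa [Function.comp_def] using
          ((Equiv.mulRight g).hasSum_iff.2 (norm_sq_eq_tsum_lp_two u)).summable⟩
      map_add' := fun _ _ => rfl
      map_smul' := fun _ _ => rfl
      norm_map' := fun u => (sq_eq_sq₀ (norm_nonneg _) (norm_nonneg _)).1 <|
        (norm_sq_eq_tsum_lp_two _).unique
          ((Equiv.mulRight g).hasSum_iff.2 (norm_sq_eq_tsum_lp_two u)) }
  map_one' := by
    ext u x
    exact congrArg u (mul_one x)
  map_mul' g h := by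
    ext u x
    exact congrArg u (mul_assoc x g h).symm

variable {X}

lemma rightRegular_apply (g : DH) (u : lp (fun _ : DH => X) 2) (x : DH) :
    rightRegular X g u x = u (x * g) :=
  rfl

end RegularRepresentation

section Cutoff

/-- A Lipschitz function equal to `1` on the ball of radius `n / 2` and vanishing outside the ball
of radius `n`. -/
noncomputable def cutoff (n : ℕ) (x : DH) : ℝ := max 0 (min 1 (2 - 2 / n * wordLen x))

lemma cutoff_nonneg (n : ℕ) (x : DH) : 0 ≤ cutoff n x := le_max_left _ _

lemma cutoff_le_one (n : ℕ) (x : DH) : cutoff n x ≤ 1 :=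
  max_le zero_le_one (min_le_left _ _)

lemma cutoff_eq_one {n : ℕ} {x : DH} (h : 2 * wordLen x ≤ n) : cutoff n x = 1 := by
  have h1 : 2 / (n : ℝ) * wordLen x ≤ 1 := by
    rw [div_mul_eq_mul_div]
    exact div_le_one_of_le₀ (by exact_mod_cast h) (Nat.cast_nonneg n)
  rw [cutoff, min_eq_left (by linarith), max_eq_right zero_le_one]

lemma cutoff_eq_zero {n : ℕ} (hn : 0 < n) {x : DH} (h : n ≤ wordLen x) : cutoff n x = 0 := by
  have h1 : 2 ≤ 2 / (n : ℝ) * wordLen x := by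
    rw [div_mul_eq_mul_div, le_div_iff₀ (by exact_mod_cast hn)]
    gcongr
  exact max_eq_left ((min_le_right _ _).trans (by linarith))

lemma wordLen_mul_le_succ (x : DH) {s : DH} (hs : s ∈ gens) :
    wordLen (x * s) ≤ wordLen x + 1 :=
  (wordLen_mul_le x s).trans (Nat.add_le_add_left (wordLen_le_one hs) _)

lemma wordLen_le_mul_succ (x : DH) {s : DH} (hs : s ∈ gens) :
    wordLen x ≤ wordLen (x * s) + 1 := by
  simpa using wordLen_mul_le_succ (x * s) (inv_mem_gens hs)

lemma abs_cutoff_sub_le (n : ℕ) (x : DH) {s : DH} (hs : s ∈ gens) :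
    |cutoff n x - cutoff n (x * s)| ≤ 2 / n := by
  have h1 : (wordLen (x * s) : ℝ) ≤ wordLen x + 1 := mod_cast wordLen_mul_le_succ x hs
  have h2 : (wordLen x : ℝ) ≤ wordLen (x * s) + 1 := mod_cast wordLen_le_mul_succ x hs
  have h3 : |(2 - 2 / (n : ℝ) * wordLen x) - (2 - 2 / (n : ℝ) * wordLen (x * s))| ≤ 2 / n := by
    rw [show (2 - 2 / (n : ℝ) * wordLen x) - (2 - 2 / (n : ℝ) * wordLen (x * s))
      = 2 / n * (wordLen (x * s) - wordLen x) by ring, abs_mul, abs_of_nonneg (by positivity)]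
    exact mul_le_of_le_one_right (by positivity) (abs_le.2 ⟨by linarith, by linarith⟩)
  unfold cutoff
  refine (abs_max_sub_max_le_max _ _ _ _).trans ?_
  rw [sub_self, abs_zero]
  refine max_le (by positivity) ((abs_min_sub_min_le_max _ _ _ _).trans ?_)
  rw [sub_self, abs_zero]
  exact max_le (by positivity) h3

end Cutoff

section Localization

variable {X : Type*} [NormedAddCommGroup X] [NormedSpace ℝ X]

/-- The localization of `f` to the ball of radius `n`. -/
noncomputable def localize (n : ℕ) (f : DH → X) (x : DH) : X := cutoff n x • (f x - f 1)

lemma localize_eq_zero {n : ℕ} (hn : 0 < n) (f : DH → X) {x : DH} (hx : n ≤ wordLen x) :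
    localize n f x = 0 := by
  rw [localize, cutoff_eq_zero hn hx, zero_smul]

lemma localize_sub_eq {n : ℕ} (f : DH → X) {x y : DH} (hx : 2 * wordLen x ≤ n)
    (hy : 2 * wordLen y ≤ n) : localize n f x - localize n f y = f x - f y := by
  rw [localize, localize, cutoff_eq_one hx, cutoff_eq_one hy, one_smul, one_smul,
    sub_sub_sub_cancel_right]

lemma memℓp_localize {n : ℕ} (hn : 0 < n) (f : DH → X) : Memℓp (localize n f) 2 := by
  refine Memℓp.of_exponent_ge (memℓp_zero ((finite_Ball n).subset fun x hx => ?_)) zero_le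
  rw [mem_Ball]
  by_contra! h
  exact hx (localize_eq_zero hn f h.le)

lemma norm_localize_sub_le {n : ℕ} (hn : 0 < n) {D : ℝ} (hD : 0 ≤ D) {f : DH → X}
    (hf : ∀ x ∈ Ball n, ∀ y ∈ Ball n, ‖f x - f y‖ ≤ D * (dW x y : ℝ)) (x : DH) {s : DH}
    (hs : s ∈ gens) : ‖localize n f x - localize n f (x * s)‖ ≤ 3 * D := by
  have hn' : (0 : ℝ) < n := mod_cast hn
  have h0 : ‖(0 : X) - 0‖ ≤ 3 * D := by
    rw [sub_zero, norm_zero]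
    positivity
  by_cases hx : wordLen x ≤ n
  · by_cases hxs : wordLen (x * s) ≤ n
    · have e : localize n f x - localize n f (x * s) = cutoff n x • (f x - f (x * s))
          + (cutoff n x - cutoff n (x * s)) • (f (x * s) - f 1) := by
        simp only [localize]
        module
      have h1 : ‖f x - f (x * s)‖ ≤ D := by
        refine (hf x (mem_Ball.2 hx) _ (mem_Ball.2 hxs)).trans ?_
        rw [dW_self_mul]
        exact mul_le_of_le_one_right hD (by exact_mod_cast wordLen_le_one hs)
      have h2 : ‖f (x * s) - f 1‖ ≤ D * n := by
        refine (hf _ (mem_Ball.2 hxs) 1 (mem_Ball.2 (by simp))).trans ?_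
        rw [dW_one]
        gcongr
      rw [e]
      calc _ ≤ ‖cutoff n x • (f x - f (x * s))‖
            + ‖(cutoff n x - cutoff n (x * s)) • (f (x * s) - f 1)‖ := norm_add_le _ _
        _ = cutoff n x * ‖f x - f (x * s)‖
            + |cutoff n x - cutoff n (x * s)| * ‖f (x * s) - f 1‖ := by
          rw [norm_smul, norm_smul, Real.norm_of_nonneg (cutoff_nonneg n x), Real.norm_eq_abs]
        _ ≤ 1 * D + 2 / n * (D * n) := by
          gcongr
          · exact cutoff_le_one n x
          · exact abs_cutoff_sub_le n x hs
        _ = 3 * D := by field_simp; ring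
    · have h := wordLen_mul_le_succ x hs
      rwa [localize_eq_zero hn f (by omega), localize_eq_zero hn f (by omega)]
  · have h := wordLen_le_mul_succ x hs
    rwa [localize_eq_zero hn f (by omega), localize_eq_zero hn f (by omega)]

lemma norm_horizontal_sq_le {n : ℕ} (hn : 0 < n) {D : ℝ} (hD : 0 ≤ D) {f : DH → X}
    (hf : ∀ x ∈ Ball n, ∀ y ∈ Ball n, ‖f x - f y‖ ≤ D * (dW x y : ℝ)) {s : DH} (hs : s ∈ gens)
    {v : lp (fun _ : DH => X) 2} (hv : ⇑v = localize n f) :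
    ‖v - rightRegular X s v‖ ^ 2 ≤ 243 * n ^ 4 * D ^ 2 := by
  have hsum := norm_sq_eq_tsum_lp_two (v - rightRegular X s v)
  simp only [lp.coeFn_sub, Pi.sub_apply, rightRegular_apply, hv] at hsum
  have h0 : ∀ x ∉ (finite_Ball n).toFinset,
      ‖localize n f x - localize n f (x * s)‖ ^ 2 = 0 := by
    intro x hx
    rw [Set.Finite.mem_toFinset, mem_Ball] at hx
    have h := wordLen_le_mul_succ x hs
    rw [localize_eq_zero hn f (by omega), localize_eq_zero hn f (by omega)]
    simp
  have hcard : ((finite_Ball n).toFinset.card : ℝ) ≤ 27 * n ^ 4 := by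
    rw [← Set.ncard_eq_toFinset_card _ (finite_Ball n)]
    exact_mod_cast ncard_Ball_le hn
  rw [hsum.unique (hasSum_sum_of_ne_finset_zero h0)]
  calc _ ≤ ∑ _x ∈ (finite_Ball n).toFinset, (3 * D) ^ 2 := by
        gcongr with x
        exact norm_localize_sub_le hn hD hf x hs
    _ = (finite_Ball n).toFinset.card * (3 * D) ^ 2 := by rw [Finset.sum_const, nsmul_eq_mul]
    _ ≤ 27 * n ^ 4 * (3 * D) ^ 2 := by gcongr
    _ = _ := by ring

lemma le_norm_vertical_sq {n r k : ℕ} (hr : 1 ≤ r) (hrn : 40 * r ≤ n) (hk : 2 ^ k ≤ r)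
    {f : DH → X} (hf : ∀ x ∈ Ball n, ∀ y ∈ Ball n, (dW x y : ℝ) ≤ ‖f x - f y‖)
    {v : lp (fun _ : DH => X) 2} (hv : ⇑v = localize n f) :
    (r : ℝ) ^ 4 ≤ ‖v - rightRegular X (gC ^ 2 ^ k) v‖ ^ 2 / 2 ^ k := by
  have hsum := norm_sq_eq_tsum_lp_two (v - rightRegular X (gC ^ 2 ^ k) v)
  simp only [lp.coeFn_sub, Pi.sub_apply, rightRegular_apply, hv] at hsum
  have hw : wordLen (gC ^ 2 ^ k) ≤ 6 * r := by
    have := wordLen_gC_two_pow_sq_le k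
    by_contra! h
    nlinarith
  have hx : ∀ x ∈ (finite_Ball (10 * r)).toFinset,
      (2 : ℝ) ^ k ≤ ‖localize n f x - localize n f (x * gC ^ 2 ^ k)‖ ^ 2 := by
    intro x hx
    rw [Set.Finite.mem_toFinset, mem_Ball] at hx
    have hxc := wordLen_mul_le x (gC ^ 2 ^ k)
    rw [localize_sub_eq f (by omega) (by omega)]
    have h1 := hf x (mem_Ball.2 (by omega)) (x * gC ^ 2 ^ k) (mem_Ball.2 (by omega))
    rw [dW_self_mul] at h1
    have h2 : (2 : ℝ) ^ k ≤ (wordLen (gC ^ 2 ^ k) : ℝ) ^ 2 :=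
      mod_cast le_wordLen_gC_pow_sq (2 ^ k)
    exact h2.trans (by gcongr)
  have hcard : (r : ℝ) ^ 4 ≤ (finite_Ball (10 * r)).toFinset.card := by
    rw [← Set.ncard_eq_toFinset_card _ (finite_Ball (10 * r))]
    exact_mod_cast pow_four_le_ncard_Ball hr
  rw [le_div_iff₀ (by positivity)]
  calc (r : ℝ) ^ 4 * 2 ^ k ≤ (finite_Ball (10 * r)).toFinset.card * 2 ^ k := by gcongr
    _ = ∑ _x ∈ (finite_Ball (10 * r)).toFinset, (2 : ℝ) ^ k := by
        rw [Finset.sum_const, nsmul_eq_mul]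
    _ ≤ _ := Finset.sum_le_sum hx
    _ ≤ _ := sum_le_hasSum _ (fun _ _ => by positivity) hsum

/-- Balls of radius `n` in the Heisenberg group embed into a uniformly convex space only with
distortion at least a constant multiple of `√(log n)`. -/
theorem exists_distortion_lower_bound {δ : ℝ} (hδ : 0 < δ) (hX : TwoConvex δ X) :
    ∃ K : ℝ, 0 < K ∧ ∀ n : ℕ, 2 ≤ n → ∀ D : ℝ, 1 ≤ D → ∀ f : DH → X,
      (∀ x ∈ Ball n, ∀ y ∈ Ball n,
        (dW x y : ℝ) ≤ ‖f x - f y‖ ∧ ‖f x - f y‖ ≤ D * (dW x y : ℝ)) →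
      K * Real.sqrt (Real.log n) ≤ D := by
  set C : ℝ := 14 * (216 + 3456 / δ) * (486 * 80 ^ 4) with hC
  have hC0 : 0 < C := by positivity
  refine ⟨1 / √(80 + C), by positivity, fun n hn D hD f hf => ?_⟩
  suffices hlog : Real.log n ≤ (80 + C) * D ^ 2 by
    rw [div_mul_eq_mul_div, one_mul, div_le_iff₀ (by positivity)]
    calc √(Real.log n) ≤ √((80 + C) * D ^ 2) := Real.sqrt_le_sqrt hlog
      _ = D * √(80 + C) := by
        rw [Real.sqrt_mul (by positivity), Real.sqrt_sq (by linarith), mul_comm]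
  have hD2 : 1 ≤ D ^ 2 := one_le_pow₀ hD
  have hn0 : 0 < n := by omega
  rcases lt_or_ge n 40 with hn40 | hn40
  · have h1 : Real.log n ≤ n := Real.log_le_self (Nat.cast_nonneg n)
    have h2 : (n : ℝ) ≤ 40 := mod_cast hn40.le
    nlinarith
  set r : ℕ := n / 40
  have hr : 1 ≤ r := by omega
  have hrn : 40 * r ≤ n := by omega
  have hnr : n ≤ 80 * r := by omega
  set K : ℕ := Nat.log 2 r + 1
  let v : lp (fun _ : DH => X) 2 := ⟨localize n f, memℓp_localize hn0 f⟩
  have hv : ⇑v = localize n f := rfl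
  have hup := fun x hx y hy => (hf x hx y hy).2
  have hA := norm_horizontal_sq_le hn0 (by linarith) hup gA_mem_gens hv
  have hB := norm_horizontal_sq_le hn0 (by linarith) hup gB_mem_gens hv
  have hP := sum_vertical_le_horizontal (rightRegular X) hδ hX.lp_two K v
  have hlow : K * (r : ℝ) ^ 4
      ≤ ∑ k ∈ Finset.range K, ‖v - rightRegular X (gC ^ 2 ^ k) v‖ ^ 2 / 2 ^ k := by
    rw [← nsmul_eq_mul, ← Finset.card_range K, ← Finset.sum_const, Finset.card_range]
    refine Finset.sum_le_sum fun k hk => le_norm_vertical_sq hr hrn ?_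
      (fun x hx y hy => (hf x hx y hy).1) hv
    exact Nat.pow_le_of_le_log (by omega) (Nat.lt_succ_iff.1 (Finset.mem_range.1 hk))
  have hr0 : (0 : ℝ) < (r : ℝ) ^ 4 := by positivity
  have hnr' : (n : ℝ) ≤ 80 * r := mod_cast hnr
  have hK : (K : ℝ) ≤ C * D ^ 2 := by
    refine le_of_mul_le_mul_right ?_ hr0
    calc (K : ℝ) * (r : ℝ) ^ 4
        ≤ 14 * (216 + 3456 / δ) * (243 * n ^ 4 * D ^ 2 + 243 * n ^ 4 * D ^ 2) :=
          hlow.trans (hP.trans (by gcongr))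
      _ = 14 * (216 + 3456 / δ) * 486 * D ^ 2 * (n : ℝ) ^ 4 := by ring
      _ ≤ 14 * (216 + 3456 / δ) * 486 * D ^ 2 * (80 * r : ℝ) ^ 4 := by gcongr
      _ = C * D ^ 2 * (r : ℝ) ^ 4 := by rw [hC]; ring
  have hrK : (r : ℝ) ≤ 2 ^ K := mod_cast (Nat.lt_pow_succ_log_self one_lt_two r).le
  have hlog : Real.log n ≤ 80 + K := by
    calc Real.log n ≤ Real.log (80 * 2 ^ K) :=
          Real.log_le_log (by exact_mod_cast hn0) (by linarith)
      _ = Real.log 80 + K * Real.log 2 := by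
          rw [Real.log_mul (by norm_num) (by positivity), Real.log_pow]
      _ ≤ 80 + K * 1 := by
          gcongr
          · exact Real.log_le_self (by norm_num)
          · linarith [Real.log_two_lt_d9]
      _ = 80 + K := by ring
  nlinarith

end Localization

end DH

open DH in
/-- Corollary 1.3, case `p ∈ (1,2]`: the distortion of the ball `B_n` in `ℓ_p`
is at least a constant multiple of `√(log n)`. -/
theorem distortion_lower_bound_lp_le_two (p : ℝ) (hp1 : 1 < p) (hp2 : p ≤ 2)
    [Fact (1 ≤ ENNReal.ofReal p)] :
    ∃ K : ℝ, 0 < K ∧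
      ∀ n : ℕ, 2 ≤ n → ∀ D : ℝ, 1 ≤ D →
        ∀ f : DH → lp (fun _ : ℕ => ℝ) (ENNReal.ofReal p),
          (∀ x ∈ Ball n, ∀ y ∈ Ball n,
            (dW x y : ℝ) ≤ ‖f x - f y‖ ∧ ‖f x - f y‖ ≤ D * (dW x y : ℝ)) →
          K * Real.sqrt (Real.log n) ≤ D := by
  exact exists_distortion_lower_bound (by linarith) (twoConvex_lp_real hp1 hp2)
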